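/- arXiv:1903.06199 — 3 statements merged into one kernel-verified Lean document; each statement's English description precedes it below -/
import Mathlib

section
/- For all real numbers s > 0, b > 0 and a ∈ ℝ, one has ∫_0^∞ t^(s-1) e^(-t b^2) (∫_0^a √(t/π) e^(-t u^2) du) dt = (Γ(s+1/2)/√π) · ∫_0^a (u^2+b^2)^(-(s+1/2)) du, where the inner integral ∫_0^a is the (oriented) interval integral from 0 to a. -/
open MeasureTheory Real intervalIntegral

/-- For `s > 0`, `b > 0` and `a ∈ ℝ`,
`∫_0^∞ t^(s-1) e^(-t b²) (∫_0^a √(t/π) e^(-t u²) du) dt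
  = (Γ(s+1/2)/√π) · ∫_0^a (u²+b²)^(-(s+1/2)) du`. -/
theorem iterated_integral_gamma (s b a : ℝ) (hs : 0 < s) (hb : 0 < b) :
    ∫ t in Set.Ioi (0 : ℝ),
        t ^ (s - 1) * Real.exp (-(t * b ^ 2)) *
          ∫ u in (0 : ℝ)..a, Real.sqrt (t / Real.pi) * Real.exp (-(t * u ^ 2)) =
      (Real.Gamma (s + 1 / 2) / Real.sqrt Real.pi) *
        ∫ u in (0 : ℝ)..a, (u ^ 2 + b ^ 2) ^ (-(s + 1 / 2)) := by
  have key : ∀ t ∈ Set.Ioi (0 : ℝ), ∀ u : ℝ,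
      t ^ (s - 1) * Real.exp (-(t * b ^ 2)) *
        (Real.sqrt (t / Real.pi) * Real.exp (-(t * u ^ 2))) =
      (Real.sqrt Real.pi)⁻¹ * (t ^ (s + 1 / 2 - 1) * Real.exp (-((u ^ 2 + b ^ 2) * t))) := by
    intro t ht u
    have ht : 0 < t := ht
    have e1 : t ^ (s + 1 / 2 - 1) = t ^ (s - 1) * Real.sqrt t := by
      rw [Real.sqrt_eq_rpow, ← Real.rpow_add ht]; congr 1; ring
    have e2 : Real.exp (-((u ^ 2 + b ^ 2) * t)) =
        Real.exp (-(t * b ^ 2)) * Real.exp (-(t * u ^ 2)) := by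
      rw [← Real.exp_add]; congr 1; ring
    rw [e1, e2, Real.sqrt_div ht.le]
    ring
  have h1 : ∫ t in Set.Ioi (0 : ℝ),
        t ^ (s - 1) * Real.exp (-(t * b ^ 2)) *
          ∫ u in (0 : ℝ)..a, Real.sqrt (t / Real.pi) * Real.exp (-(t * u ^ 2)) =
      ∫ t in Set.Ioi (0 : ℝ), ∫ u in (0 : ℝ)..a,
        (Real.sqrt Real.pi)⁻¹ * (t ^ (s + 1 / 2 - 1) * Real.exp (-((u ^ 2 + b ^ 2) * t))) := by
    refine setIntegral_congr_fun measurableSet_Ioi fun t ht => ?_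
    rw [← intervalIntegral.integral_const_mul]
    exact intervalIntegral.integral_congr fun u _ => key t ht u
  have hdom : IntegrableOn (fun t : ℝ => (Real.sqrt Real.pi)⁻¹ *
      (t ^ (s + 1 / 2 - 1) * Real.exp (-b ^ 2 * t))) (Set.Ioi 0) := by
    have := integrableOn_rpow_mul_exp_neg_mul_rpow (p := 1) (s := s + 1 / 2 - 1) (b := b ^ 2)
      (by linarith) (by norm_num) (by positivity)
    simp only [Real.rpow_one] at this
    exact this.const_mul _
  have hint : Integrable (Function.uncurry fun (u t : ℝ) =>
      (Real.sqrt Real.pi)⁻¹ * (t ^ (s + 1 / 2 - 1) * Real.exp (-((u ^ 2 + b ^ 2) * t))))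
      ((volume.restrict (Set.uIoc 0 a)).prod (volume.restrict (Set.Ioi 0))) := by
    have hone : Integrable (fun _ : ℝ => (1 : ℝ)) (volume.restrict (Set.uIoc 0 a)) := by
      have : IsFiniteMeasure (volume.restrict (Set.uIoc 0 a)) := by
        unfold Set.uIoc; infer_instance
      exact integrable_const _
    refine (hone.mul_prod hdom).mono' ?_ ?_
    · apply Measurable.aestronglyMeasurable
      unfold Function.uncurry
      fun_prop
    · have hpos : ∀ᵐ z : ℝ × ℝ ∂((volume.restrict (Set.uIoc 0 a)).prod
          (volume.restrict (Set.Ioi 0))), 0 < z.2 :=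
        Measure.quasiMeasurePreserving_snd.ae (ae_restrict_mem measurableSet_Ioi)
      filter_upwards [hpos] with z hz
      simp only [Function.uncurry]
      rw [Real.norm_of_nonneg (by positivity), one_mul]
      gcongr
      nlinarith [mul_nonneg (sq_nonneg z.1) hz.le]
  rw [h1, ← intervalIntegral.integral_const_mul]
  have h2 := intervalIntegral_integral_swap hint
  rw [← h2]
  refine intervalIntegral.integral_congr fun u _ => ?_
  have hp : 0 < u ^ 2 + b ^ 2 := by positivity
  rw [MeasureTheory.integral_const_mul,
    Real.integral_rpow_mul_exp_neg_mul_Ioi (by linarith) hp, one_div (u ^ 2 + b ^ 2),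
    Real.inv_rpow hp.le, ← Real.rpow_neg hp.le]
  ring
end

section
/- Let a ∈ ℝ and b > 0, and define F : ℝ → ℝ by F(s) = (2 Γ(s+1/2)/(√π · Γ(s))) · ∫_0^a (u^2+b^2)^(-(s+1/2)) du, where 1/Γ(0) is interpreted as 0 (consistently with the convention Γ(0) = 0 for the real Gamma function, under which F(0) = 0). Then F is differentiable at s = 0 with derivative F'(0) = 2 log((a + √(a^2+b^2))/b). -/
open Real intervalIntegral

theorem aux_integral (a b : ℝ) (hb : 0 < b) :
    ∫ u in (0 : ℝ)..a, (u ^ 2 + b ^ 2) ^ (-((0 : ℝ) + 1 / 2)) =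
      Real.log ((a + Real.sqrt (a ^ 2 + b ^ 2)) / b) := by
  have hpos : ∀ u : ℝ, 0 < u ^ 2 + b ^ 2 := fun u => by positivity
  have hsq : ∀ u : ℝ, Real.sqrt (u ^ 2 + b ^ 2) = b * Real.sqrt (1 + (u / b) ^ 2) := by
    intro u
    have : u ^ 2 + b ^ 2 = b ^ 2 * (1 + (u / b) ^ 2) := by
      field_simp
      ring
    rw [this, Real.sqrt_mul (by positivity), Real.sqrt_sq hb.le]
  have hd : ∀ u ∈ Set.uIcc 0 a, HasDerivAt (fun x : ℝ => Real.arsinh (x / b))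
      ((u ^ 2 + b ^ 2) ^ (-((0 : ℝ) + 1 / 2))) u := by
    intro u _
    have h := ((hasDerivAt_id u).div_const b).arsinh
    simp only [id] at h
    convert h using 1
    rw [zero_add, Real.rpow_neg (hpos u).le, ← Real.sqrt_eq_rpow, hsq u]
    simp [mul_comm]
  have hc : Continuous (fun u : ℝ => (u ^ 2 + b ^ 2) ^ (-((0 : ℝ) + 1 / 2))) :=
    Continuous.rpow_const (by fun_prop) (fun u => Or.inl (hpos u).ne')
  rw [intervalIntegral.integral_eq_sub_of_hasDerivAt hd (hc.intervalIntegrable _ _)]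
  rw [zero_div, Real.arsinh_zero, sub_zero, Real.arsinh, hsq a]
  congr 1
  field_simp

theorem aux_continuous (a b : ℝ) (hb : 0 < b) :
    Continuous (fun s : ℝ => ∫ u in (0 : ℝ)..a, (u ^ 2 + b ^ 2) ^ (-(s + 1 / 2))) := by
  apply intervalIntegral.continuous_parametric_intervalIntegral_of_continuous'
  refine Continuous.rpow (by fun_prop) (by fun_prop) (fun p => Or.inl ?_)
  have : 0 < p.2 ^ 2 + b ^ 2 := by positivity
  exact this.ne'

/-- For `a ∈ ℝ` and `b > 0`, the function
`F(s) = (2 Γ(s+1/2)/(√π · Γ(s))) · ∫_0^a (u²+b²)^(-(s+1/2)) du`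
(with `1/Γ(0) = 0`, the convention built into `Real.Gamma 0 = 0` and division by zero)
is differentiable at `s = 0` with derivative `2 log((a + √(a²+b²))/b)`. -/
theorem hasDerivAt_zeta_difference (a b : ℝ) (hb : 0 < b) :
    HasDerivAt
      (fun s : ℝ =>
        2 * Real.Gamma (s + 1 / 2) / (Real.sqrt Real.pi * Real.Gamma s) *
          ∫ u in (0 : ℝ)..a, (u ^ 2 + b ^ 2) ^ (-(s + 1 / 2)))
      (2 * Real.log ((a + Real.sqrt (a ^ 2 + b ^ 2)) / b)) 0 := by
  have hg : ContinuousAt (fun s : ℝ =>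
      2 * Real.Gamma (s + 1 / 2) / (Real.sqrt Real.pi * Real.Gamma (s + 1)) *
        ∫ u in (0 : ℝ)..a, (u ^ 2 + b ^ 2) ^ (-(s + 1 / 2))) 0 := by
    have hG : ∀ c : ℝ, 0 < c → ContinuousAt (fun s : ℝ => Real.Gamma (s + c)) 0 := by
      intro c hc
      have h1 : ContinuousAt Real.Gamma (0 + c) := by
        apply (Real.differentiableAt_Gamma _).continuousAt
        intro m hm
        have : (0 : ℝ) ≤ m := Nat.cast_nonneg m
        linarith
      exact ContinuousAt.comp (f := fun s : ℝ => s + c) h1 (by fun_prop)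
    refine ContinuousAt.mul (ContinuousAt.div ?_ ?_ ?_) (aux_continuous a b hb).continuousAt
    · exact continuousAt_const.mul (hG _ (by norm_num))
    · exact continuousAt_const.mul (hG _ (by norm_num))
    · have : 0 < Real.sqrt Real.pi := Real.sqrt_pos.mpr Real.pi_pos
      simp [this.ne']
  have hlim := hg.tendsto
  rw [aux_integral a b hb, zero_add, zero_add, Real.Gamma_one_half_eq, Real.Gamma_one, mul_one,
    mul_div_assoc, div_self (Real.sqrt_pos.mpr Real.pi_pos).ne', mul_one] at hlim
  rw [hasDerivAt_iff_tendsto_slope_zero]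
  refine (hlim.mono_left nhdsWithin_le_nhds).congr' ?_
  filter_upwards [self_mem_nhdsWithin] with s hs
  have hs0 : s ≠ 0 := hs
  rw [Real.Gamma_add_one hs0]
  simp only [zero_add, Real.Gamma_zero, mul_zero, div_zero, zero_mul, sub_zero, smul_eq_mul]
  simp only [div_eq_mul_inv, mul_inv]
  ring
end

section
/- For every integer ℓ ≥ 2, c(ℓ)/c(2) = b(ℓ)/b(2), where b(ℓ) := (1/(2ℓ+2)) · ∏_{k=−ℓ}^{ℓ−1} ( (√((ℓ+1)^2+ℓ^2−k^2) − k − 1)/(√((ℓ+1)^2+ℓ^2−(k+1)^2) − k) )^(1/2) and c(ℓ) := ( ∏_{j=1}^{ℓ−1} (√((ℓ+1)^2+ℓ^2−j^2) + ℓ) / ∏_{j=1}^{ℓ} (√((ℓ+1)^2+ℓ^2−j^2) + ℓ + 1) ) · ( (√((ℓ+1)^2+ℓ^2) + ℓ)/(√((ℓ+1)^2+ℓ^2) + ℓ + 1) )^(1/2), with k ranging over integers and j over positive integers. -/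
open Real Finset

/-- The quantity `b(ℓ)` of equation (int.6c). -/
noncomputable def bConst (ℓ : ℕ) : ℝ :=
  (1 / (2 * (ℓ : ℝ) + 2)) *
    ∏ k ∈ Finset.Icc (-(ℓ : ℤ)) ((ℓ : ℤ) - 1),
      ((Real.sqrt (((ℓ : ℝ) + 1) ^ 2 + (ℓ : ℝ) ^ 2 - (k : ℝ) ^ 2) - k - 1) /
          (Real.sqrt (((ℓ : ℝ) + 1) ^ 2 + (ℓ : ℝ) ^ 2 - ((k : ℝ) + 1) ^ 2) - k)) ^
        ((1 : ℝ) / 2)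

/-- The quantity `c(ℓ)` of equation (int.6c). -/
noncomputable def cConst (ℓ : ℕ) : ℝ :=
  ((∏ j ∈ Finset.Icc 1 (ℓ - 1),
        (Real.sqrt (((ℓ : ℝ) + 1) ^ 2 + (ℓ : ℝ) ^ 2 - (j : ℝ) ^ 2) + ℓ)) /
      (∏ j ∈ Finset.Icc 1 ℓ,
        (Real.sqrt (((ℓ : ℝ) + 1) ^ 2 + (ℓ : ℝ) ^ 2 - (j : ℝ) ^ 2) + ℓ + 1))) *
    ((Real.sqrt (((ℓ : ℝ) + 1) ^ 2 + (ℓ : ℝ) ^ 2) + ℓ) /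
        (Real.sqrt (((ℓ : ℝ) + 1) ^ 2 + (ℓ : ℝ) ^ 2) + ℓ + 1)) ^ ((1 : ℝ) / 2)

theorem aux_prod (f : ℤ → ℝ) (n : ℕ) :
    ∏ k ∈ Finset.Icc (-(n : ℤ)) ((n : ℤ) - 1), f k =
      ∏ i ∈ Finset.range n, (f i * f (-((i : ℤ) + 1))) := by
  induction n with
  | zero => simp
  | succ n ih =>
    rw [Finset.prod_range_succ, ← ih]
    have h : Finset.Icc (-((n + 1 : ℕ) : ℤ)) (((n + 1 : ℕ) : ℤ) - 1) =
        insert (n : ℤ) (insert (-((n : ℤ) + 1)) (Finset.Icc (-(n : ℤ)) ((n : ℤ) - 1))) := by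
      ext k
      simp only [Finset.mem_Icc, Finset.mem_insert]
      push_cast
      omega
    rw [h, Finset.prod_insert, Finset.prod_insert]
    · ring
    · simp only [Finset.mem_Icc]; omega
    · simp only [Finset.mem_Icc, Finset.mem_insert]; omega

theorem aux_alg (x L j : ℝ) (hx : x ^ 2 = (L + 1) ^ 2 + L ^ 2 - j ^ 2) (hxL : L + 1 ≤ x)
    (hj : 0 ≤ j) (hjL : j ≤ L) :
    (x - j - 1) / (x + j + 1) * ((x + j - 1) / (x - j + 1)) =
      ((x + L) / (x + L + 1)) ^ 2 * ((L - j) * (L + j) / ((L + 1 - j) * (L + 1 + j))) := by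
  have h1 : 0 < x + j + 1 := by linarith
  have h2 : 0 < x - j + 1 := by linarith
  have h3 : 0 < x + L + 1 := by linarith
  have h4 : 0 < L + 1 - j := by linarith
  have h5 : 0 < L + 1 + j := by linarith
  have e1 : (x - j - 1) * (x + j - 1) = 2 * (x + L) * (x - L - 1) := by nlinarith
  have e2 : (x + j + 1) * (x - j + 1) = 2 * (x - L) * (x + L + 1) := by nlinarith
  have e3 : (L - j) * (L + j) = (x - L - 1) * (x + L + 1) := by nlinarith
  have e4 : (L + 1 - j) * (L + 1 + j) = (x - L) * (x + L) := by nlinarith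
  rw [div_mul_div_comm, div_pow, div_mul_div_comm, div_eq_div_iff (by positivity) (by positivity),
    e1, e2, e3, e4]
  ring

theorem aux_zero (x L : ℝ) (hx : x ^ 2 = (L + 1) ^ 2 + L ^ 2) (hxL : L + 1 ≤ x) (hL : 0 ≤ L) :
    (x - 1) / (x + 1) = (x + L) / (x + L + 1) * (L / (L + 1)) := by
  have h1 : 0 < x + 1 := by linarith
  have h3 : 0 < x + L + 1 := by linarith
  rw [div_mul_div_comm, div_eq_div_iff (by positivity) (by positivity)]
  nlinarith

theorem aux_main (s : ℕ → ℝ) (l : ℕ)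
    (hs : ∀ j ≤ l, s j ^ 2 = ((l : ℝ) + 1) ^ 2 + (l : ℝ) ^ 2 - (j : ℝ) ^ 2)
    (hl : ∀ j ≤ l, (l : ℝ) + 1 ≤ s j) (m : ℕ) (hm : m + 1 ≤ l) :
    ∏ i ∈ Finset.range (m + 1), ((s i - i - 1) / (s (i + 1) - i) *
        ((s (i + 1) + i) / (s i + i + 1))) =
      (∏ j ∈ Finset.Icc 1 m, ((s j + l) / (s j + l + 1)) ^ 2) * ((s 0 + l) / (s 0 + l + 1)) *
        (((l : ℝ) - m) / (l + 1 + m)) * ((s (m + 1) + m) / (s (m + 1) - m)) := by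
  induction m with
  | zero =>
    have h0 := aux_zero (s 0) l (by simpa using hs 0 (by omega)) (hl 0 (by omega)) (by positivity)
    simp only [zero_add, Finset.range_one, Finset.prod_singleton, Nat.cast_zero, sub_zero, add_zero]
    simp only [Finset.Icc_eq_empty_of_lt zero_lt_one, Finset.prod_empty, one_mul]
    rw [← h0]
    ring
  | succ m ih =>
    have hmR : ((m : ℝ) + 1 + 1) ≤ l := by exact_mod_cast hm
    have hm0 : (0 : ℝ) ≤ m := by positivity
    have h := aux_alg (s (m + 1)) l (m + 1 : ℕ) (hs _ (by omega)) (hl _ (by omega))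
      (by positivity) (by push_cast; linarith)
    rw [Finset.prod_range_succ, ih (by omega), Finset.prod_Icc_succ_top (by omega)]
    have hq : ((l : ℝ) - m) / (l + 1 + m) *
        (((l : ℝ) - (m + 1 : ℕ)) * (l + (m + 1 : ℕ)) /
          ((l + 1 - (m + 1 : ℕ)) * (l + 1 + (m + 1 : ℕ)))) =
        ((l : ℝ) - (m + 1 : ℕ)) / (l + 1 + (m + 1 : ℕ)) := by
      push_cast
      have a1 : (l : ℝ) + 1 - (m + 1) ≠ 0 := by
        intro hh; linarith
      have a2 : (l : ℝ) + 1 + (m + 1) ≠ 0 := by positivity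
      have a3 : (l : ℝ) + 1 + m ≠ 0 := by positivity
      rw [div_mul_div_comm, div_eq_div_iff (by positivity) (by positivity)]
      ring
    rw [← hq]
    have e1 : (s (m + 1) + m) / (s (m + 1) - m) =
      (s (m + 1) + (m + 1 : ℕ) - 1) / (s (m + 1) - (m + 1 : ℕ) + 1) := by
      push_cast; congr 1 <;> ring
    rw [e1]
    linear_combination ((∏ j ∈ Finset.Icc 1 m, ((s j + l) / (s j + l + 1)) ^ 2) *
      ((s 0 + l) / (s 0 + l + 1)) * (((l : ℝ) - m) / (l + 1 + m)) *
      ((s (m + 1 + 1) + (m + 1 : ℕ)) / (s (m + 1 + 1) - (m + 1 : ℕ)))) * h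

theorem aux_c_eq (l : ℕ) (hl : 1 ≤ l) : cConst l = Real.sqrt 2 * bConst l := by
  obtain ⟨m, rfl⟩ : ∃ m, l = m + 1 := ⟨l - 1, by omega⟩
  set L : ℕ := m + 1 with hL
  set s : ℕ → ℝ := fun j => Real.sqrt (((L : ℝ) + 1) ^ 2 + (L : ℝ) ^ 2 - (j : ℝ) ^ 2) with hsdef
  have hnn : ∀ j ≤ L, (j : ℝ) ^ 2 ≤ (L : ℝ) ^ 2 := by
    intro j hj
    have : (j : ℝ) ≤ L := by exact_mod_cast hj
    gcongr
  have hs : ∀ j ≤ L, s j ^ 2 = ((L : ℝ) + 1) ^ 2 + (L : ℝ) ^ 2 - (j : ℝ) ^ 2 := by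
    intro j hj
    exact Real.sq_sqrt (by nlinarith [hnn j hj, sq_nonneg ((L : ℝ) + 1)])
  have hsl : ∀ j ≤ L, (L : ℝ) + 1 ≤ s j := by
    intro j hj
    exact Real.le_sqrt_of_sq_le (by linarith [hnn j hj])
  have hs0 : ∀ j, 0 ≤ s j := fun j => Real.sqrt_nonneg _
  have hsL : s L = L + 1 := by
    have : s L = Real.sqrt (((L : ℝ) + 1) ^ 2) := by
      simp only [hsdef]; congr 1; ring
    rw [this, Real.sqrt_sq (by positivity)]
  have hmain := aux_main s L hs hsl m (by omega)
  set Q := ∏ i ∈ Finset.range (m + 1), ((s i - i - 1) / (s (i + 1) - i) *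
        ((s (i + 1) + i) / (s i + i + 1))) with hQ
  have hQ0 : 0 ≤ Q := by
    refine Finset.prod_nonneg fun i hi => ?_
    have hi' : i < L := Finset.mem_range.mp hi
    have hiR : (i : ℝ) + 1 ≤ L := by exact_mod_cast hi'
    have hi0 : (0 : ℝ) ≤ i := by positivity
    have a := hsl i (by omega)
    have b := hsl (i + 1) (by omega)
    have := hs0 i
    have := hs0 (i + 1)
    exact mul_nonneg (div_nonneg (by linarith) (by linarith)) (by positivity)
  have hb : bConst L = 1 / (2 * (L : ℝ) + 2) * Q ^ ((1 : ℝ) / 2) := by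
    unfold bConst
    rw [aux_prod, hQ, ← Real.finsetProd_rpow]
    · congr 1
      refine Finset.prod_congr rfl fun i hi => ?_
      have hi' : i < L := Finset.mem_range.mp hi
      have hiR : (i : ℝ) + 1 ≤ L := by exact_mod_cast hi'
      have hi0 : (0 : ℝ) ≤ i := by positivity
      have a := hsl i (by omega)
      have b := hsl (i + 1) (by omega)
      have := hs0 i
      have := hs0 (i + 1)
      rw [Real.mul_rpow (div_nonneg (by linarith) (by linarith)) (by positivity)]
      have e1 : Real.sqrt (((L : ℝ) + 1) ^ 2 + (L : ℝ) ^ 2 - ((-((i : ℤ) + 1) : ℤ) : ℝ) ^ 2)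
          = s (i + 1) := by
        simp only [hsdef]; congr 1; push_cast; ring
      have e2 : Real.sqrt (((L : ℝ) + 1) ^ 2 + (L : ℝ) ^ 2 -
          (((-((i : ℤ) + 1) : ℤ) : ℝ) + 1) ^ 2) = s i := by
        simp only [hsdef]; congr 1; push_cast; ring
      have e3 : Real.sqrt (((L : ℝ) + 1) ^ 2 + (L : ℝ) ^ 2 - (((i : ℤ) : ℝ) + 1) ^ 2)
          = s (i + 1) := by
        simp only [hsdef]; push_cast; rfl
      have e4 : Real.sqrt (((L : ℝ) + 1) ^ 2 + (L : ℝ) ^ 2 - ((i : ℤ) : ℝ) ^ 2) = s i := by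
        simp only [hsdef]; push_cast; rfl
      rw [e1, e2, e3, e4]
      push_cast
      congr 3 <;> ring
    · intro i hi
      have hi' : i < L := Finset.mem_range.mp hi
      have hiR : (i : ℝ) + 1 ≤ L := by exact_mod_cast hi'
      have hi0 : (0 : ℝ) ≤ i := by positivity
      have a := hsl i (by omega)
      have b := hsl (i + 1) (by omega)
      have := hs0 i
      have := hs0 (i + 1)
      exact mul_nonneg (div_nonneg (by linarith) (by linarith)) (by positivity)
  have hc : cConst L = ((∏ j ∈ Finset.Icc 1 m, (s j + L) / (s j + L + 1)) / (2 * (L : ℝ) + 2)) *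
      ((s 0 + L) / (s 0 + L + 1)) ^ ((1 : ℝ) / 2) := by
    have e0 : s 0 = Real.sqrt (((L : ℝ) + 1) ^ 2 + (L : ℝ) ^ 2) := by simp [hsdef]
    rw [e0]
    unfold cConst
    congr 1
    have : L - 1 = m := by omega
    rw [this, hL, Finset.prod_Icc_succ_top (by omega : 1 ≤ m + 1), ← hL, Finset.prod_div_distrib,
      div_div]
    have e5 : Real.sqrt (((L : ℝ) + 1) ^ 2 + (L : ℝ) ^ 2 - (L : ℝ) ^ 2) = L + 1 := hsL
    rw [e5]
    congr 2
    ring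
  have hp : ∀ x : ℝ, 0 ≤ x → (x ^ ((1 : ℝ) / 2)) ^ 2 = x := by
    intro x hx
    rw [← Real.sqrt_eq_rpow, Real.sq_sqrt hx]
  have hr0 : 0 ≤ (s 0 + L) / (s 0 + L + 1) := by
    have := hs0 0
    positivity
  have hb0 : 0 ≤ bConst L := by rw [hb]; positivity
  have hc0 : 0 ≤ cConst L := by
    rw [hc]
    refine mul_nonneg (div_nonneg (Finset.prod_nonneg fun j _ => ?_) (by positivity))
      (by positivity)
    have := hs0 j
    positivity
  rw [← sq_eq_sq₀ hc0 (by positivity), mul_pow, Real.sq_sqrt (by norm_num), hb, hc, mul_pow,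
    mul_pow, hp _ hr0, hp _ hQ0, hmain, Finset.prod_pow, ← hL, hsL]
  have hLm : (L : ℝ) = m + 1 := by rw [hL]; push_cast; rfl
  have hk : ((L : ℝ) - m) / (L + 1 + m) * ((L + 1 + m) / (L + 1 - m)) = 1 / 2 := by
    rw [hLm]
    have : (m : ℝ) + 1 + 1 + m ≠ 0 := by positivity
    rw [show (m : ℝ) + 1 - m = 1 by ring, show (m : ℝ) + 1 + 1 - m = 2 by ring]
    field_simp
  generalize (∏ j ∈ Finset.Icc 1 m, (s j + L) / (s j + L + 1)) = D
  rw [div_pow, div_pow]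
  linear_combination (-2 * D ^ 2 / (2 * (L : ℝ) + 2) ^ 2 * ((s 0 + L) / (s 0 + L + 1))) * hk

/-- For every integer `ℓ ≥ 2`, `c(ℓ)/c(2) = b(ℓ)/b(2)`. -/
theorem c_ratio_eq_b_ratio (ℓ : ℕ) (hℓ : 2 ≤ ℓ) :
    cConst ℓ / cConst 2 = bConst ℓ / bConst 2 := by
  rw [aux_c_eq ℓ (by omega), aux_c_eq 2 (by omega)]
  exact mul_div_mul_left _ _ (by positivity)
end
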